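/- arXiv:1907.08660 — 3 statements merged into one kernel-verified Lean document; each statement's English description precedes it below -/
import Mathlib

section
/- Let D ⊂ ℝ^d be a bounded measurable set, let 1 ≤ q < ∞, let −∞ = c_0 < c_1 < ⋯ < c_{n−1} < c_n = ∞ be constants and w_1, …, w_n positive constants, and define the level set map 𝒢 from the space of bounded continuous real-valued functions on the closure of D (with the sup norm) to L^q(D) by 𝒢(φ) = Σ_{l=1}^n w_l · 1_{{x ∈ D : c_{l−1} ≤ φ(x) < c_l}}. If φ is a continuous function such that the Lebesgue measure of the level set {x ∈ D : φ(x) = c_l} is zero for every l = 1, …, n−1, then 𝒢 is continuous at φ: for every sequence φ_k converging uniformly to φ on D, 𝒢(φ_k) converges to 𝒢(φ) in L^q(D). -/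
/-!
At a point `x ∈ D` the level set map is a fixed step function evaluated at `φ x`. The step function
is bounded, and locally constant away from the thresholds. Almost every `φ x` avoids the
thresholds, so the level set maps converge almost everywhere on `D`, and dominated convergence on a
set of finite measure turns this into convergence in `L^q`.
-/

open MeasureTheory Filter Topology

/-- The level set map `𝒢` determined by thresholds
`−∞ = c_0 < c_1 < ⋯ < c_n = ∞` (encoded as `c : Fin (n+1) → EReal`) and weights
`w_1, …, w_n`: `𝒢(φ)(x) = ∑_{l=1}^n w_l · 1_{{x ∈ D : c_{l−1} ≤ φ(x) < c_l}}(x)`. -/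
noncomputable def levelSetMap (d n : ℕ) (D : Set (EuclideanSpace ℝ (Fin d)))
    (c : Fin (n + 1) → EReal) (w : Fin n → ℝ)
    (φ : EuclideanSpace ℝ (Fin d) → ℝ) : EuclideanSpace ℝ (Fin d) → ℝ := fun x =>
  ∑ l : Fin n, w l *
    Set.indicator {y | y ∈ D ∧ c l.castSucc ≤ (φ y : EReal) ∧ (φ y : EReal) < c l.succ}
      (fun _ => (1 : ℝ)) x

section StepFunction

/-- The step function with breakpoints `c 0, …, c n`, equal to `w l` on the `l`-th interval
`[c l, c (l + 1))` and to a sum of weights where these intervals overlap (they do not if `c` is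
monotone). On `D`, the level set map is composition with it, for thresholds in `EReal`. -/
noncomputable def stepFunction {X F : Type*} [Preorder X] [AddCommMonoid F] {n : ℕ}
    (c : Fin (n + 1) → X) (w : Fin n → F) (t : X) : F :=
  ∑ l : Fin n, (Set.Ico (c l.castSucc) (c l.succ)).indicator (fun _ => w l) t

variable {X F : Type*} {n : ℕ}

lemma norm_stepFunction_le [Preorder X] [SeminormedAddCommGroup F] (c : Fin (n + 1) → X)
    (w : Fin n → F) (t : X) : ‖stepFunction c w t‖ ≤ ∑ l, ‖w l‖ :=
  norm_sum_le_of_le _ fun _ _ => norm_indicator_le_norm_self _ _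

variable [LinearOrder X] [TopologicalSpace X] [OrderClosedTopology X]

lemma stronglyMeasurable_stepFunction [MeasurableSpace X] [OpensMeasurableSpace X]
    [AddCommMonoid F] [TopologicalSpace F] [ContinuousAdd F] (c : Fin (n + 1) → X)
    (w : Fin n → F) : StronglyMeasurable (stepFunction c w) :=
  Finset.stronglyMeasurable_fun_sum _ fun _ _ =>
    stronglyMeasurable_const.indicator measurableSet_Ico

lemma eventually_le_iff_le_of_ne {a t : X} (h : t ≠ a) : ∀ᶠ s in 𝓝 t, (a ≤ s ↔ a ≤ t) := by
  rcases h.lt_or_gt with hlt | hgt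
  · filter_upwards [eventually_lt_nhds hlt] with s hs
    simp only [hs.not_ge, hlt.not_ge]
  · filter_upwards [eventually_gt_nhds hgt] with s hs
    simp only [hs.le, hgt.le]

lemma continuousAt_stepFunction_of_forall_ne [AddCommMonoid F] [TopologicalSpace F]
    {c : Fin (n + 1) → X} (w : Fin n → F) {t : X} (ht : ∀ l, t ≠ c l) :
    ContinuousAt (stepFunction c w) t := by
  have hle : ∀ᶠ s in 𝓝 t, ∀ l, (c l ≤ s ↔ c l ≤ t) :=
    eventually_all.2 fun l => eventually_le_iff_le_of_ne (ht l)
  have hconst : stepFunction c w =ᶠ[𝓝 t] fun _ => stepFunction c w t := by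
    filter_upwards [hle] with s hs
    simp only [stepFunction, Set.indicator_apply, Set.mem_Ico, ← not_le, hs]
  exact continuousAt_const.congr hconst.symm

end StepFunction

section LpConvergence

variable {α ι F : Type*} [MeasurableSpace α] {μ : Measure α} {k : Filter ι}
  [k.IsCountablyGenerated] [NormedAddCommGroup F] {p : ENNReal}

lemma tendsto_eLpNorm_zero_of_dominated (hp0 : p ≠ 0) (hp : p ≠ ⊤) {f : ι → α → F} {g : α → ℝ}
    (hg : MemLp g p μ) (hf : ∀ᶠ i in k, AEStronglyMeasurable (f i) μ)
    (hfg : ∀ᶠ i in k, ∀ᵐ x ∂μ, ‖f i x‖ ≤ g x)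
    (hlim : ∀ᵐ x ∂μ, Tendsto (fun i => f i x) k (𝓝 0)) :
    Tendsto (fun i => eLpNorm (f i) p μ) k (𝓝 0) := by
  have hp_pos : 0 < p.toReal := ENNReal.toReal_pos hp0 hp
  have hlintegral : Tendsto (fun i => ∫⁻ x, ‖f i x‖ₑ ^ p.toReal ∂μ) k (𝓝 (∫⁻ _, 0 ∂μ)) := by
    refine tendsto_lintegral_filter_of_dominated_convergence' (fun x => ‖g x‖ₑ ^ p.toReal)
      (hf.mono fun i hi => hi.enorm.pow_const _) ?_
      (lintegral_rpow_enorm_lt_top_of_eLpNorm_lt_top hp0 hp hg.eLpNorm_lt_top).ne ?_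
    · filter_upwards [hfg] with i hi
      filter_upwards [hi] with x hx
      gcongr
      exact enorm_le_iff_norm_le.2 (hx.trans (le_abs_self _))
    · filter_upwards [hlim] with x hx
      simpa [hp_pos] using hx.enorm.ennrpow_const p.toReal
  simpa [eLpNorm_eq_lintegral_rpow_enorm_toReal hp0 hp, hp_pos] using
    hlintegral.ennrpow_const (1 / p.toReal)

lemma tendsto_eLpNorm_comp_sub_comp_of_ae_continuousAt {X : Type*} [TopologicalSpace X]
    [MeasurableSpace X] [IsFiniteMeasure μ] (hp0 : p ≠ 0) (hp : p ≠ ⊤) {G : X → F}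
    (hG : StronglyMeasurable G) {C : ℝ} (hGC : ∀ t, ‖G t‖ ≤ C) {f : ι → α → X} {g : α → X}
    (hf : ∀ᶠ i in k, AEMeasurable (f i) μ) (hg : AEMeasurable g μ)
    (hcont : ∀ᵐ x ∂μ, ContinuousAt G (g x))
    (hlim : ∀ᵐ x ∂μ, Tendsto (fun i => f i x) k (𝓝 (g x))) :
    Tendsto (fun i => eLpNorm (fun x => G (f i x) - G (g x)) p μ) k (𝓝 0) := by
  refine tendsto_eLpNorm_zero_of_dominated hp0 hp (memLp_const (C + C))
    (hf.mono fun i hi => (hG.aestronglyMeasurable.comp_aemeasurable hi).sub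
      (hG.aestronglyMeasurable.comp_aemeasurable hg))
    (.of_forall fun i => ae_of_all _ fun x => norm_sub_le_of_le (hGC _) (hGC _)) ?_
  filter_upwards [hcont, hlim] with x hGx hx
  exact tendsto_sub_nhds_zero_iff.2 (hGx.tendsto.comp hx)

end LpConvergence

lemma ae_restrict_forall_coe_ne {α κ : Type*} [MeasurableSpace α] [Countable κ] {μ : Measure α}
    {D : Set α} (hD : NullMeasurableSet D μ) {c : κ → EReal} {φ : α → ℝ}
    (hnull : ∀ l, c l ≠ ⊥ → c l ≠ ⊤ → μ {x | x ∈ D ∧ (φ x : EReal) = c l} = 0) :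
    ∀ᵐ x ∂μ.restrict D, ∀ l, (φ x : EReal) ≠ c l := by
  refine ae_all_iff.2 fun l => ?_
  by_cases hbot : c l = ⊥
  · simp [hbot]
  by_cases htop : c l = ⊤
  · simp [htop]
  rw [ae_restrict_iff'₀ hD, ae_iff]
  simpa using hnull l hbot htop

lemma levelSetMap_eqOn_stepFunction {d n : ℕ} {D : Set (EuclideanSpace ℝ (Fin d))}
    (c : Fin (n + 1) → EReal) (w : Fin n → ℝ) (φ : EuclideanSpace ℝ (Fin d) → ℝ) :
    Set.EqOn (levelSetMap d n D c w φ) (fun x => stepFunction c w (φ x : EReal)) D := by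
  classical
  intro x hx
  simp only [levelSetMap, stepFunction, Set.indicator_apply, Set.mem_Ico, Set.mem_ofPred_eq, hx,
    true_and, mul_ite, mul_one, mul_zero]

theorem levelSetMap_continuous_of_null_level_sets_general {d n : ℕ}
    {D : Set (EuclideanSpace ℝ (Fin d))} {μ : Measure (EuclideanSpace ℝ (Fin d))}
    (hD : NullMeasurableSet D μ) (hμD : μ D ≠ ⊤) {p : ENNReal} (hp0 : p ≠ 0) (hp : p ≠ ⊤)
    {c : Fin (n + 1) → EReal} (w : Fin n → ℝ) {φ : EuclideanSpace ℝ (Fin d) → ℝ}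
    (hφ : AEMeasurable φ (μ.restrict D))
    (hnull : ∀ l, c l ≠ ⊥ → c l ≠ ⊤ → μ {x | x ∈ D ∧ (φ x : EReal) = c l} = 0)
    {ι : Type*} {k : Filter ι} [k.IsCountablyGenerated]
    {ψ : ι → EuclideanSpace ℝ (Fin d) → ℝ}
    (hψ : ∀ᶠ i in k, AEMeasurable (ψ i) (μ.restrict D))
    (hlim : ∀ᵐ x ∂μ.restrict D, Tendsto (fun i => ψ i x) k (𝓝 (φ x))) :
    Tendsto (fun i => eLpNorm
        (fun x => levelSetMap d n D c w (ψ i) x - levelSetMap d n D c w φ x) p (μ.restrict D))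
      k (𝓝 0) := by
  have : IsFiniteMeasure (μ.restrict D) := isFiniteMeasure_restrict.2 hμD
  have hcont : ∀ᵐ x ∂μ.restrict D, ContinuousAt (stepFunction c w) (φ x : EReal) :=
    (ae_restrict_forall_coe_ne hD hnull).mono fun _ => continuousAt_stepFunction_of_forall_ne w
  refine (tendsto_eLpNorm_comp_sub_comp_of_ae_continuousAt hp0 hp
    (stronglyMeasurable_stepFunction c w) (norm_stepFunction_le c w)
    (hψ.mono fun _ hi => hi.coe_real_ereal) hφ.coe_real_ereal hcont
    (hlim.mono fun _ => EReal.tendsto_coe.2)).congr fun i => eLpNorm_congr_ae ?_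
  filter_upwards [ae_restrict_mem₀ hD] with x hx
  rw [levelSetMap_eqOn_stepFunction c w (ψ i) hx, levelSetMap_eqOn_stepFunction c w φ hx]

/-- **Continuity of the level set map at functions with null level sets.**
Let `D ⊂ ℝ^d` be bounded and measurable, `1 ≤ q < ∞`, and let `φ ∈ C(D̄)` be such that
the Lebesgue measure of `{x ∈ D : φ(x) = c_l}` vanishes for every interior threshold
`l = 1, …, n−1`.  Then the level set map `𝒢` is continuous at `φ`: for every sequence
`φ_k` converging uniformly to `φ` on `D` (with each `φ_k ∈ C(D̄)`), `𝒢(φ_k) → 𝒢(φ)`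
in `L^q(D)`. -/
theorem levelSetMap_continuous_of_null_level_sets
    (d n : ℕ) (hn : 0 < n)
    (D : Set (EuclideanSpace ℝ (Fin d)))
    (hD : Bornology.IsBounded D) (hDm : MeasurableSet D)
    (q : ℝ) (hq : 1 ≤ q)
    (c : Fin (n + 1) → EReal) (hc : StrictMono c)
    (hc0 : c 0 = ⊥) (hcn : c (Fin.last n) = ⊤)
    (w : Fin n → ℝ) (hw : ∀ l, 0 < w l)
    (φ : EuclideanSpace ℝ (Fin d) → ℝ)
    (hφc : ContinuousOn φ (closure D))
    (hφb : Bornology.IsBounded (φ '' closure D))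
    (hnull : ∀ l : Fin (n + 1), l ≠ 0 → l ≠ Fin.last n →
      volume {x | x ∈ D ∧ (φ x : EReal) = c l} = 0)
    (φseq : ℕ → EuclideanSpace ℝ (Fin d) → ℝ)
    (hseqc : ∀ k, ContinuousOn (φseq k) (closure D))
    (hseqb : ∀ k, Bornology.IsBounded (φseq k '' closure D))
    (hconv : TendstoUniformlyOn φseq φ atTop D) :
    Tendsto (fun k => eLpNorm
        (fun x => levelSetMap d n D c w (φseq k) x - levelSetMap d n D c w φ x)
        (ENNReal.ofReal q) (volume.restrict D))
      atTop (𝓝 0) := by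
  exact levelSetMap_continuous_of_null_level_sets_general hDm.nullMeasurableSet
    hD.measure_lt_top.ne (ENNReal.ofReal_pos.2 (zero_lt_one.trans_le hq)).ne'
    ENNReal.ofReal_ne_top w ((hφc.mono subset_closure).aemeasurable hDm)
    (fun l hbot htop => hnull l (fun h => hbot (h ▸ hc0)) (fun h => htop (h ▸ hcn)))
    (.of_forall fun k => ((hseqc k).mono subset_closure).aemeasurable hDm)
    ((ae_restrict_mem hDm).mono fun _ hx => hconv.tendsto_at hx)
end

section
/- Let D ⊂ ℝ^d be a bounded measurable set with Lebesgue measure 𝔪, and let C(D̄) denote the space of bounded continuous real-valued functions on the closure of D with the sup norm. For a fixed constant c ∈ ℝ, define the functional 𝔐_c : C(D̄) → [0, ∞) by 𝔐_c(φ) = 𝔪({x ∈ D : φ(x) = c}). Then 𝔐_c is a Borel measurable function on C(D̄); equivalently, for every t ∈ ℝ, the set {φ ∈ C(D̄) : 𝔐_c(φ) < t} is a Borel subset of C(D̄). -/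
open MeasureTheory
open Set Filter Topology
open scoped BoundedContinuousFunction

/-
For `F` closed, the sets `φ ⁻¹' cthickening r F` decrease to `φ ⁻¹' F` as `r ↓ 0`, and each of them
contains `ψ ⁻¹' F` for every `ψ` within distance `r` of `φ`. Hence `φ ↦ μ (φ ⁻¹' F)` is upper
semicontinuous for a finite measure `μ`, and in particular Borel. An s-finite measure is a countable
sum of finite ones, so measurability (though not semicontinuity) persists.
-/

section Preimage

variable {X Y : Type*} [TopologicalSpace X] [MeasurableSpace X] [OpensMeasurableSpace X]
  [PseudoMetricSpace Y] {F : Set Y}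

theorem tendsto_measure_preimage_cthickening (μ : Measure X) [IsFiniteMeasure μ] {f : X → Y}
    (hf : Continuous f) (hF : IsClosed F) :
    Tendsto (fun r => μ (f ⁻¹' Metric.cthickening r F)) (𝓝 0) (𝓝 (μ (f ⁻¹' F))) := by
  borelize Y
  have h := tendsto_measure_cthickening_of_isClosed (μ := μ.map f)
    ⟨1, one_pos, measure_ne_top _ _⟩ hF
  simpa only [Measure.map_apply hf.measurable hF.measurableSet,
    Measure.map_apply hf.measurable Metric.isClosed_cthickening.measurableSet] using h

theorem upperSemicontinuous_measure_preimage (μ : Measure X) [IsFiniteMeasure μ]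
    (hF : IsClosed F) : UpperSemicontinuous fun φ : X →ᵇ Y => μ (φ ⁻¹' F) := by
  intro φ t ht
  have hlim := tendsto_measure_preimage_cthickening μ φ.continuous hF
  have hlt : ∀ᶠ r in 𝓝[>] (0 : ℝ), μ (φ ⁻¹' Metric.cthickening r F) < t :=
    (hlim.mono_left nhdsWithin_le_nhds).eventually_lt_const ht
  obtain ⟨r, hr_lt, hr_pos⟩ := (hlt.and self_mem_nhdsWithin).exists
  filter_upwards [Metric.ball_mem_nhds φ hr_pos] with ψ hψ
  have hsub : ψ ⁻¹' F ⊆ φ ⁻¹' Metric.cthickening r F := fun x hx =>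
    Metric.mem_cthickening_of_dist_le _ _ _ _ hx <| calc
      dist (φ x) (ψ x) ≤ dist φ ψ := BoundedContinuousFunction.dist_coe_le_dist x
      _ ≤ r := (Metric.mem_ball'.mp hψ).le
  exact (measure_mono hsub).trans_lt hr_lt

theorem measurable_measure_preimage [MeasurableSpace (X →ᵇ Y)] [OpensMeasurableSpace (X →ᵇ Y)]
    (μ : Measure X) [SFinite μ] (hF : IsClosed F) :
    Measurable fun φ : X →ᵇ Y => μ (φ ⁻¹' F) := by
  have hsum (φ : X →ᵇ Y) : μ (φ ⁻¹' F) = ∑' n, sfiniteSeq μ n (φ ⁻¹' F) := by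
    rw [← Measure.sum_apply _ (hF.preimage φ.continuous).measurableSet, sum_sfiniteSeq]
  simp only [hsum]
  exact Measurable.tsum fun n =>
    (upperSemicontinuous_measure_preimage (sfiniteSeq μ n) hF).measurable

end Preimage

section Comap

variable {X Z : Type*} [MeasurableSpace X] [MeasurableSpace Z] {f : X → Z}

theorem sFinite_comap (hf : MeasurableEmbedding f) (μ : Measure Z) [SFinite μ] :
    SFinite (μ.comap f) := by
  refine ⟨fun n => (sfiniteSeq μ n).comap f, inferInstance, ?_⟩
  ext s hs
  rw [Measure.sum_apply _ hs]
  simp only [hf.comap_apply]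
  rw [← Measure.sum_apply _ (hf.measurableSet_image' hs), sum_sfiniteSeq]

theorem comap_restrict_apply_eq_measure_image (hf : MeasurableEmbedding f) (μ : Measure Z)
    (D : Set Z) {s : Set X} (hs : MeasurableSet s) :
    (μ.restrict D).comap f s = μ (f '' (s ∩ f ⁻¹' D)) := by
  rw [hf.comap_apply, Measure.restrict_apply (hf.measurableSet_image' hs), image_inter_preimage]

end Comap

theorem level_set_measure_functional_measurable_general
    {X Y : Type*} [TopologicalSpace X] [MeasurableSpace X] [OpensMeasurableSpace X]
    [MetricSpace Y] (μ : Measure X) [SFinite μ] (D : Set X) (c : Y)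
    [MeasurableSpace (closure D →ᵇ Y)] [OpensMeasurableSpace (closure D →ᵇ Y)] :
    Measurable fun φ : closure D →ᵇ Y =>
      μ (Subtype.val '' {y : closure D | (y : X) ∈ D ∧ φ y = c}) := by
  have hemb : MeasurableEmbedding (Subtype.val : closure D → X) :=
    .subtype_coe isClosed_closure.measurableSet
  have hlevel (φ : closure D →ᵇ Y) :
      μ (Subtype.val '' {y : closure D | (y : X) ∈ D ∧ φ y = c}) =
        (μ.restrict D).comap Subtype.val (φ ⁻¹' {c}) := by
    have hφ : IsClosed (φ ⁻¹' {c}) := isClosed_singleton.preimage φ.continuous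
    rw [comap_restrict_apply_eq_measure_image hemb μ D hφ.measurableSet, inter_comm]
    rfl
  have := sFinite_comap hemb (μ.restrict D)
  simp only [hlevel]
  exact measurable_measure_preimage _ isClosed_singleton

/-- **Borel measurability of the level-set-measure functional.**
On the space `C(D̄)` of bounded continuous real-valued functions on the closure of a
bounded measurable set `D ⊂ ℝ^d` (with the sup norm and its Borel σ-algebra), the
functional `𝔐_c(φ) = 𝔪({x ∈ D : φ(x) = c})` is Borel measurable. -/
theorem level_set_measure_functional_measurable
    (d : ℕ) (D : Set (EuclideanSpace ℝ (Fin d)))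
    (hD : Bornology.IsBounded D) (hDm : MeasurableSet D)
    (c : ℝ) :
    @Measurable (BoundedContinuousFunction (closure D) ℝ) ENNReal
      (borel (BoundedContinuousFunction (closure D) ℝ)) inferInstance
      (fun φ => volume
        (Subtype.val '' {y : closure D | (y : EuclideanSpace ℝ (Fin d)) ∈ D ∧ φ y = c})) := by
  borelize (BoundedContinuousFunction (closure D) ℝ)
  exact level_set_measure_functional_measurable_general volume D c
end

section
/- Let D ⊂ ℝ^d be a bounded measurable set with Lebesgue measure 𝔪, let θ_1, …, θ_J ∈ ℝ^d, λ_1, …, λ_J > 0, c ∈ ℝ, and let μ_a be the standard Gaussian measure N(0, I) on ℝ^J. Define φ(x, a) = Σ_{s=1}^J a_s · exp(−|x − θ_s|²/(2λ_s²)) and the random level set D_c(a) = {x ∈ D : φ(x, a) = c}. Then ∫_{ℝ^J} 𝔪(D_c(a)) dμ_a(a) = 0, and consequently 𝔪(D_c(a)) = 0 for μ_a-almost every a ∈ ℝ^J. -/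
open MeasureTheory ProbabilityTheory

/-!
For fixed `x`, the equation `∑ s, a s * p s x = c` cuts out a hyperplane in the space of
coefficients `a` as soon as some `p s x` is nonzero. Every line in the `s`-th coordinate direction
meets this hyperplane at most once, so the hyperplane is null for a product of measures without
atoms. By Tonelli's theorem, a condition satisfied for every `x` by almost every `a` is satisfied
for almost every `a` by almost every `x`.
-/

section

variable {ι : Type*} [Fintype ι]

lemma ae_pi_of_ae_update [DecidableEq ι] {X : ι → Type*} [∀ i, MeasurableSpace (X i)]
    {μ : ∀ i, Measure (X i)} [∀ i, SigmaFinite (μ i)] (i : ι) {P : (∀ i, X i) → Prop}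
    (hP : MeasurableSet {x | P x}) (h : ∀ x, ∀ᵐ t ∂μ i, P (Function.update x i t)) :
    ∀ᵐ x ∂Measure.pi μ, P x := by
  let bad : (∀ i, X i) → ENNReal := {x | P x}ᶜ.indicator 1
  have hbad : Measurable bad := measurable_one.indicator hP.compl
  have bad_marginal : lmarginal μ {i} bad = lmarginal μ {i} 0 := by
    rw [lmarginal_singleton, lmarginal_singleton]
    funext x
    refine lintegral_congr_ae ?_
    filter_upwards [h x] with t ht
    exact Set.indicator_of_notMem (not_not_intro ht) 1
  calc Measure.pi μ {x | P x}ᶜ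
      = ∫⁻ x, bad x ∂Measure.pi μ := (lintegral_indicator_one hP.compl).symm
    _ = ∫⁻ _, 0 ∂Measure.pi μ :=
      lintegral_eq_of_lmarginal_eq {i} hbad measurable_zero bad_marginal
    _ = 0 := lintegral_zero

variable {R : Type*} [Ring R] [NoZeroDivisors R]

lemma subsingleton_setOf_sum_update_mul_eq [DecidableEq ι] {w : ι → R} {i : ι} (hi : w i ≠ 0)
    (a : ι → R) (c : R) : {t | ∑ s, Function.update a i t s * w s = c}.Subsingleton := by
  have split_sum (t : R) : ∑ s, Function.update a i t s * w s =
      t * w i + ∑ s ∈ Finset.univ.erase i, a s * w s := by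
    rw [← Finset.add_sum_erase _ _ (Finset.mem_univ i), Function.update_self]
    congr 1
    refine Finset.sum_congr rfl fun s hs ↦ ?_
    rw [Function.update_of_ne (Finset.ne_of_mem_erase hs)]
  intro t ht u hu
  rw [Set.mem_ofPred_eq, split_sum] at ht hu
  exact mul_right_cancel₀ hi (add_right_cancel (ht.trans hu.symm))

variable [MeasurableSpace R] [MeasurableSingletonClass R] [MeasurableAdd₂ R]

lemma ae_pi_sum_mul_ne [MeasurableMul R] {μ : ι → Measure R} [∀ s, SigmaFinite (μ s)]
    {w : ι → R} {i : ι} [NullSingletonClass (μ i)] (hi : w i ≠ 0) (c : R) :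
    ∀ᵐ a ∂Measure.pi μ, ∑ s, a s * w s ≠ c := by
  classical
  have hsum : Measurable fun a : ι → R ↦ ∑ s, a s * w s := by fun_prop
  refine ae_pi_of_ae_update i (hsum (measurableSet_singleton c).compl) fun a ↦ ?_
  exact (subsingleton_setOf_sum_update_mul_eq hi a c).countable.ae_notMem (μ i)

/-- The level set `D_c(a)` inside `D` of the parametric level set function
`φ(x, a) = ∑ s, a s * p s x`, for an arbitrary family `p` in place of the radial basis functions. -/
def parametricLevelSet {E : Type*} (p : ι → E → R) (D : Set E) (c : R) (a : ι → R) : Set E :=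
  {x | x ∈ D ∧ ∑ s, a s * p s x = c}

variable [MeasurableMul₂ R] {E : Type*} [MeasurableSpace E]

theorem random_level_set_null_ae_general {μ : ι → Measure R} [∀ s, SigmaFinite (μ s)]
    [∀ s, NullSingletonClass (μ s)] {ν : Measure E} [SFinite ν] {p : ι → E → R}
    (hp : ∀ s, Measurable (p s)) {D : Set E} (hpD : ∀ᵐ x ∂ν.restrict D, ∃ s, p s x ≠ 0) (c : R) :
    ∫⁻ a, ν (parametricLevelSet p D c a) ∂Measure.pi μ = 0 ∧
      ∀ᵐ a ∂Measure.pi μ, ν (parametricLevelSet p D c a) = 0 := by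
  have hφ : Measurable fun z : (ι → R) × E ↦ ∑ s, z.1 s * p s z.2 := by fun_prop
  have hφc : MeasurableSet {z : (ι → R) × E | ∑ s, z.1 s * p s z.2 ≠ c} :=
    hφ (measurableSet_singleton c).compl
  have ae_ae_ne : ∀ᵐ x ∂ν.restrict D, ∀ᵐ a ∂Measure.pi μ, ∑ s, a s * p s x ≠ c := by
    filter_upwards [hpD] with x ⟨s, hs⟩
    exact ae_pi_sum_mul_ne (w := (p · x)) hs c
  have ae_null : ∀ᵐ a ∂Measure.pi μ, ν (parametricLevelSet p D c a) = 0 := by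
    filter_upwards [(Measure.ae_ae_comm hφc).2 ae_ae_ne] with a ha
    have hslice : MeasurableSet {x | ∑ s, a s * p s x ≠ c} := measurable_prodMk_left hφc
    rw [ae_restrict_iff hslice, ae_iff] at ha
    simpa only [parametricLevelSet, ne_eq, Classical.not_imp, not_not] using ha
  exact ⟨lintegral_eq_zero_of_ae_eq_zero ae_null, ae_null⟩

end

/-- **The random level set has zero Lebesgue measure almost surely (parameter space).**
With `φ(x, a) = ∑_s a_s · exp(−‖x − θ_s‖²/(2 λ_s²))` and
`D_c(a) = {x ∈ D : φ(x, a) = c}`, the expectation `∫ 𝔪(D_c(a)) dμ_a(a)` vanishes,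
and consequently `𝔪(D_c(a)) = 0` for `μ_a`-almost every `a`. -/
theorem random_level_set_null_ae
    (d J : ℕ) (hJ : 0 < J)
    (D : Set (EuclideanSpace ℝ (Fin d)))
    (hD : Bornology.IsBounded D) (hDm : MeasurableSet D)
    (θ : Fin J → EuclideanSpace ℝ (Fin d))
    (lam : Fin J → ℝ) (hlam : ∀ s, 0 < lam s)
    (c : ℝ)
    (μa : Measure (Fin J → ℝ))
    (hμa : μa = Measure.pi fun _ => gaussianReal 0 1) :
    (∫⁻ a, volume {x | x ∈ D ∧
        ∑ s, a s * Real.exp (-‖x - θ s‖ ^ 2 / (2 * lam s ^ 2)) = c} ∂μa) = 0 ∧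
    (∀ᵐ a ∂μa, volume {x | x ∈ D ∧
        ∑ s, a s * Real.exp (-‖x - θ s‖ ^ 2 / (2 * lam s ^ 2)) = c} = 0) := by
  subst hμa
  have := nullSingletonClass_gaussianReal (μ := 0) one_ne_zero
  exact random_level_set_null_ae_general (fun s ↦ by fun_prop)
    (.of_forall fun x ↦ ⟨⟨0, hJ⟩, (Real.exp_pos _).ne'⟩) c
end
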